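/- For every z > 2, the quantity R₃ = Σᵢ₌₁ⁿ E[ξᵢ 1{ξᵢ > 1}] · E[f_z(W̄⁽ⁱ⁾)] satisfies |R₃| ≤ (1/2)(e^{−1/2} + e^{e − 2}) · e^{−z/2} · (β₂ + β₃). -/

import Mathlib

open MeasureTheory ProbabilityTheory Real

/-- The standard normal cumulative distribution function. -/
noncomputable def Phi (z : ℝ) : ℝ :=
  (Real.sqrt (2 * Real.pi))⁻¹ * ∫ u in Set.Iic z, Real.exp (-u ^ 2 / 2)

/-- The bounded solution `f_z` of the Stein equation
`f'(w) - w f(w) = 1{w ≤ z} - Φ(z)`. -/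
noncomputable def fz (z w : ℝ) : ℝ :=
  if w ≤ z then Real.sqrt (2 * Real.pi) * Real.exp (w ^ 2 / 2) * Phi w * (1 - Phi z)
  else Real.sqrt (2 * Real.pi) * Real.exp (w ^ 2 / 2) * Phi z * (1 - Phi w)

/-- The derivative `f_z'`, expressed via the Stein equation. -/
noncomputable def fz' (z w : ℝ) : ℝ :=
  w * fz z w + (if w ≤ z then 1 else 0) - Phi z

/-- The truncation `x̄ᵢ = ξᵢ 1{ξᵢ ≤ 1}`. -/
noncomputable def xbar {Ω : Type*} {n : ℕ} (ξ : Fin n → Ω → ℝ) (i : Fin n) (ω : Ω) : ℝ :=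
  if ξ i ω ≤ 1 then ξ i ω else 0

/-- `W̄ = ∑ᵢ x̄ᵢ`. -/
noncomputable def Wbar {Ω : Type*} {n : ℕ} (ξ : Fin n → Ω → ℝ) (ω : Ω) : ℝ :=
  ∑ i, xbar ξ i ω

/-- `W̄⁽ⁱ⁾ = W̄ - x̄ᵢ`. -/
noncomputable def Wbari {Ω : Type*} {n : ℕ} (ξ : Fin n → Ω → ℝ) (i : Fin n) (ω : Ω) : ℝ :=
  Wbar ξ ω - xbar ξ i ω

/-- `K̄ᵢ(t) = E[x̄ᵢ (1{0 ≤ t ≤ x̄ᵢ} - 1{x̄ᵢ ≤ t < 0})]`. -/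
noncomputable def Kbar {Ω : Type*} [MeasureSpace Ω] {n : ℕ} (ξ : Fin n → Ω → ℝ)
    (i : Fin n) (t : ℝ) : ℝ :=
  ∫ ω, xbar ξ i ω * ((if 0 ≤ t ∧ t ≤ xbar ξ i ω then (1 : ℝ) else 0)
    - (if xbar ξ i ω ≤ t ∧ t < 0 then (1 : ℝ) else 0))

/-- `β₂ = ∑ᵢ E[ξᵢ² 1{|ξᵢ| > 1}]`. -/
noncomputable def beta2 {Ω : Type*} [MeasureSpace Ω] {n : ℕ} (ξ : Fin n → Ω → ℝ) : ℝ :=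
  ∑ i, ∫ ω, (if 1 < |ξ i ω| then (ξ i ω) ^ 2 else 0)

/-- `β₃ = ∑ᵢ E[|ξᵢ|³ 1{|ξᵢ| ≤ 1}]`. -/
noncomputable def beta3 {Ω : Type*} [MeasureSpace Ω] {n : ℕ} (ξ : Fin n → Ω → ℝ) : ℝ :=
  ∑ i, ∫ ω, (if |ξ i ω| ≤ 1 then |ξ i ω| ^ 3 else 0)

lemma g_int : Integrable (fun u : ℝ => Real.exp (-u ^ 2 / 2)) := by
  have := integrable_exp_neg_mul_sq (b := 1/2) (by norm_num)
  refine this.congr (Filter.Eventually.of_forall fun u => ?_)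
  simp only
  congr 1; ring

lemma g_total : ∫ u : ℝ, Real.exp (-u ^ 2 / 2) = √(2 * π) := by
  have := integral_gaussian (1/2)
  rw [show (2 * π) = π / (1/2) by ring, ← this]
  congr 1; ext u; congr 1; ring

lemma s_pos : 0 < √(2 * π) := by positivity

lemma s_Phi (z : ℝ) : √(2 * π) * Phi z = ∫ u in Set.Iic z, Real.exp (-u ^ 2 / 2) := by
  unfold Phi
  rw [← mul_assoc, mul_inv_cancel₀ s_pos.ne', one_mul]

lemma s_one_sub_Phi (z : ℝ) :
    √(2 * π) * (1 - Phi z) = ∫ u in Set.Ioi z, Real.exp (-u ^ 2 / 2) := by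
  rw [mul_sub, s_Phi, mul_one, ← g_total, ← integral_add_compl (measurableSet_Iic (a := z)) g_int,
    Set.compl_Iic]
  ring

lemma Phi_nonneg (z : ℝ) : 0 ≤ Phi z := by
  unfold Phi
  have : 0 ≤ ∫ u in Set.Iic z, Real.exp (-u ^ 2 / 2) := integral_nonneg fun u => (exp_pos _).le
  positivity

lemma Phi_le_one (z : ℝ) : Phi z ≤ 1 := by
  have h := s_one_sub_Phi z
  have : 0 ≤ ∫ u in Set.Ioi z, Real.exp (-u ^ 2 / 2) := integral_nonneg fun u => (exp_pos _).le
  rw [← h] at this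
  have := nonneg_of_mul_nonneg_right this s_pos
  linarith

lemma mills (z : ℝ) (hz : 0 < z) :
    √(2 * π) * (1 - Phi z) ≤ Real.exp (-z ^ 2 / 2) / z := by
  rw [s_one_sub_Phi]
  have hd : ∀ x ∈ Set.Ici z, HasDerivAt (fun u : ℝ => -(Real.exp (-u ^ 2 / 2) / z))
      (x / z * Real.exp (-x ^ 2 / 2)) x := by
    intro x _
    have h1 : HasDerivAt (fun u : ℝ => -u ^ 2 / 2) (-x) x := by
      have := ((hasDerivAt_pow 2 x).neg).div_const 2
      convert! this using 1
      simp
      ring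
    convert! (h1.exp.div_const z).neg using 1
    ring
  have hlim : Filter.Tendsto (fun u : ℝ => -(Real.exp (-u ^ 2 / 2) / z)) Filter.atTop (nhds 0) := by
    have : Filter.Tendsto (fun u : ℝ => Real.exp (-u ^ 2 / 2)) Filter.atTop (nhds 0) := by
      apply Real.tendsto_exp_atBot.comp
      have : Filter.Tendsto (fun u : ℝ => u ^ 2 / 2) Filter.atTop Filter.atTop :=
        (Filter.tendsto_pow_atTop (by norm_num)).atTop_div_const (by norm_num)
      refine (Filter.tendsto_neg_atTop_atBot.comp this).congr fun u => ?_
      simp only [Function.comp]; ring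
    simpa using (this.div_const z).neg
  have hpos : ∀ x ∈ Set.Ioi z, 0 ≤ x / z * Real.exp (-x ^ 2 / 2) := by
    intro x hx
    have : 0 < x := hz.trans hx
    positivity
  have hi := integrableOn_Ioi_deriv_of_nonneg' hd hpos hlim
  have hv := integral_Ioi_of_hasDerivAt_of_nonneg' hd hpos hlim
  have : ∫ u in Set.Ioi z, Real.exp (-u ^ 2 / 2) ≤
      ∫ u in Set.Ioi z, u / z * Real.exp (-u ^ 2 / 2) := by
    refine setIntegral_mono_on g_int.integrableOn hi measurableSet_Ioi fun u hu => ?_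
    have : 1 ≤ u / z := (one_le_div hz).2 (le_of_lt hu)
    nlinarith [exp_pos (-u ^ 2 / 2)]
  rw [hv] at this
  linarith

lemma Phi_neg_bound (w : ℝ) (hw : w ≤ 0) : Real.exp (w ^ 2 / 2) * Phi w ≤ 1 := by
  have h1 : ∫ u in Set.Iic w, Real.exp (-u ^ 2 / 2) ≤
      ∫ u in Set.Iic w, Real.exp (-w ^ 2 / 2) * Real.exp (-(u - w) ^ 2 / 2) := by
    refine setIntegral_mono_on g_int.integrableOn
      ((g_int.comp_sub_right w).const_mul _).integrableOn measurableSet_Iic fun u hu => ?_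
    rw [← Real.exp_add]
    apply Real.exp_le_exp.2
    have : u ≤ w := hu
    nlinarith
  have h2 : ∫ u in Set.Iic w, Real.exp (-w ^ 2 / 2) * Real.exp (-(u - w) ^ 2 / 2) ≤
      ∫ u, Real.exp (-w ^ 2 / 2) * Real.exp (-(u - w) ^ 2 / 2) :=
    setIntegral_le_integral ((g_int.comp_sub_right w).const_mul _)
      (Filter.Eventually.of_forall fun u => by positivity)
  have h3 : ∫ u, Real.exp (-w ^ 2 / 2) * Real.exp (-(u - w) ^ 2 / 2) =
      Real.exp (-w ^ 2 / 2) * √(2 * π) := by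
    rw [integral_const_mul, integral_sub_right_eq_self (fun u : ℝ => Real.exp (-u ^ 2 / 2)) w,
      g_total]
  have h4 : √(2 * π) * Phi w ≤ Real.exp (-w ^ 2 / 2) * √(2 * π) := by
    rw [s_Phi]; linarith
  have h5 : Phi w ≤ Real.exp (-w ^ 2 / 2) := by
    rw [mul_comm (Real.exp _)] at h4
    exact le_of_mul_le_mul_left h4 s_pos
  calc _ ≤ Real.exp (w ^ 2 / 2) * Real.exp (-w ^ 2 / 2) := by gcongr
    _ = 1 := by rw [← Real.exp_add]; simp [neg_div]

lemma fz_nonneg (z w : ℝ) : 0 ≤ fz z w := by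
  have h1 := Phi_nonneg z
  have h2 := Phi_nonneg w
  have h3 : 0 ≤ 1 - Phi z := by linarith [Phi_le_one z]
  have h4 : 0 ≤ 1 - Phi w := by linarith [Phi_le_one w]
  unfold fz
  split_ifs <;> positivity

lemma fz_le (z w : ℝ) (hz : 2 < z) :
    fz z w ≤ 1 / 2 * Real.exp (-z / 2) * (Real.exp (-(1 / 2)) + Real.exp w) := by
  have key : 1 / 2 * Real.exp (-z / 2) * (Real.exp (-(1 / 2)) + Real.exp w) =
      1 / 2 * (Real.exp (-z / 2 - 1 / 2) + Real.exp (w - z / 2)) := by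
    rw [mul_assoc, mul_add, ← Real.exp_add, ← Real.exp_add]
    ring_nf
  rw [key]
  have hm := mills z (by linarith)
  have hm' : √(2 * π) * (1 - Phi z) ≤ 1 / 2 * Real.exp (-z ^ 2 / 2) := by
    refine hm.trans ?_
    rw [div_le_iff₀ (by linarith)]
    nlinarith [exp_pos (-z ^ 2 / 2)]
  have h0 : 0 ≤ √(2 * π) * (1 - Phi z) :=
    mul_nonneg s_pos.le (by linarith [Phi_le_one z])
  have p1 := exp_pos (-z / 2 - 1 / 2)
  have p2 := exp_pos (w - z / 2)
  unfold fz
  split_ifs with hwz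
  · rw [show √(2 * π) * Real.exp (w ^ 2 / 2) * Phi w * (1 - Phi z) =
      (Real.exp (w ^ 2 / 2) * Phi w) * (√(2 * π) * (1 - Phi z)) by ring]
    rcases le_or_gt w 0 with hw | hw
    · have h1 : Real.exp (-z ^ 2 / 2) ≤ Real.exp (-z / 2 - 1 / 2) :=
        Real.exp_le_exp.2 (by nlinarith)
      have := mul_le_mul (Phi_neg_bound w hw) hm' h0 zero_le_one
      linarith
    · have h2 : (Real.exp (w ^ 2 / 2) * Phi w) * (√(2 * π) * (1 - Phi z)) ≤
          Real.exp (w ^ 2 / 2) * (1 / 2 * Real.exp (-z ^ 2 / 2)) :=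
        mul_le_mul (mul_le_of_le_one_right (exp_pos _).le (Phi_le_one w)) hm' h0 (exp_pos _).le
      have h3 : Real.exp (w ^ 2 / 2) * (1 / 2 * Real.exp (-z ^ 2 / 2)) =
          1 / 2 * Real.exp (w ^ 2 / 2 + -z ^ 2 / 2) := by rw [Real.exp_add]; ring
      rcases le_or_gt w (z - 1) with h | h
      · have : Real.exp (w ^ 2 / 2 + -z ^ 2 / 2) ≤ Real.exp (-z / 2 - 1 / 2) :=
          Real.exp_le_exp.2 (by nlinarith)
        linarith
      · have : Real.exp (w ^ 2 / 2 + -z ^ 2 / 2) ≤ Real.exp (w - z / 2) :=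
          Real.exp_le_exp.2 (by nlinarith)
        linarith
  · push Not at hwz
    have hw := mills w (by linarith)
    have h1 : Real.exp (w ^ 2 / 2) * (√(2 * π) * (1 - Phi w)) ≤ 1 / w := by
      calc _ ≤ Real.exp (w ^ 2 / 2) * (Real.exp (-w ^ 2 / 2) / w) := by gcongr
        _ = 1 / w := by
          rw [← mul_div_assoc, ← Real.exp_add]; simp [neg_div]
    have h2 : 1 / w ≤ 1 / 2 := one_div_le_one_div_of_le (by norm_num) (by linarith)
    have h3 : 0 ≤ Real.exp (w ^ 2 / 2) * (√(2 * π) * (1 - Phi w)) := by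
      have : 0 ≤ 1 - Phi w := by linarith [Phi_le_one w]
      positivity
    have h4 : 1 ≤ Real.exp (w - z / 2) := Real.one_le_exp (by linarith)
    have h5 : √(2 * π) * Real.exp (w ^ 2 / 2) * Phi z * (1 - Phi w) =
      (Real.exp (w ^ 2 / 2) * (√(2 * π) * (1 - Phi w))) * Phi z := by ring
    rw [h5]
    have := mul_le_of_le_one_right h3 (Phi_le_one z)
    linarith

lemma exp_shift (x : ℝ) :
    HasSum (fun k : ℕ => x ^ (k + 2) / (Nat.factorial (k + 2) : ℝ)) (Real.exp x - 1 - x) := by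
  have h := NormedSpace.expSeries_div_hasSum_exp (𝔸 := ℝ) x
  rw [← Real.exp_eq_exp_ℝ] at h
  have := (hasSum_nat_add_iff' 2).2 h
  convert! this using 1
  simp [Finset.sum_range_succ]
  ring

lemma exp_quad (x : ℝ) (hx : x ≤ 1) :
    Real.exp x ≤ 1 + x + (Real.exp 1 - 2) * x ^ 2 := by
  rcases le_or_gt 0 x with h | h
  · have h1 := exp_shift x
    have h2 := (exp_shift 1).mul_right (x ^ 2)
    have := hasSum_le (fun k => ?_) h1 h2
    · linarith
    · simp only [one_pow]
      rw [pow_add, div_mul_eq_mul_div, one_mul]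
      gcongr
      exact mul_le_of_le_one_left (by positivity) (pow_le_one₀ h hx)
  · have h1 := Real.quadratic_le_exp_of_nonneg (x := -x) (by linarith)
    have h2 : Real.exp x * Real.exp (-x) = 1 := by rw [← Real.exp_add]; simp
    have h3 : 0 < 1 + x + x ^ 2 / 2 := by nlinarith [sq_nonneg (x + 1)]
    have h4 : Real.exp x ≤ 1 + x + x ^ 2 / 2 := by
      have h5 : Real.exp x * (1 + -x + (-x) ^ 2 / 2) ≤ 1 := by
        calc _ ≤ Real.exp x * Real.exp (-x) := by gcongr
          _ = 1 := h2
      by_contra! hc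
      have h6 : 0 < 1 + -x + (-x) ^ 2 / 2 := by nlinarith
      have := mul_lt_mul_of_pos_right hc h6
      nlinarith [sq_nonneg (x ^ 2)]
    have := Real.exp_one_gt_d9
    nlinarith [sq_nonneg x]

section
variable {Ω : Type*} [MeasureSpace Ω] [IsProbabilityMeasure (ℙ : Measure Ω)]

lemma xb_meas {n : ℕ} (ξ : Fin n → Ω → ℝ) (hmeas : ∀ i, Measurable (ξ i)) (i : Fin n) :
    Measurable (xbar ξ i) :=
  Measurable.ite (measurableSet_le (hmeas i) measurable_const) (hmeas i) measurable_const

lemma xb_le {n : ℕ} (ξ : Fin n → Ω → ℝ) (i : Fin n) (ω : Ω) : xbar ξ i ω ≤ 1 := by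
  unfold xbar; split_ifs with h <;> linarith

lemma xb_abs {n : ℕ} (ξ : Fin n → Ω → ℝ) (i : Fin n) (ω : Ω) : |xbar ξ i ω| ≤ |ξ i ω| := by
  unfold xbar; split_ifs with h <;> simp

lemma xb_exp_int {n : ℕ} (ξ : Fin n → Ω → ℝ) (hmeas : ∀ i, Measurable (ξ i)) (i : Fin n) :
    Integrable (fun ω => Real.exp (xbar ξ i ω)) := by
  refine Integrable.of_bound (xb_meas ξ hmeas i).exp.aestronglyMeasurable (Real.exp 1)
    (Filter.Eventually.of_forall fun ω => ?_)
  rw [Real.norm_eq_abs, abs_of_pos (exp_pos _)]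
  exact Real.exp_le_exp.2 (xb_le ξ i ω)

lemma xb_mgf {n : ℕ} (ξ : Fin n → Ω → ℝ) (hmeas : ∀ i, Measurable (ξ i))
    (hL2 : ∀ i, MemLp (ξ i) 2 ℙ) (hmean : ∀ i, ∫ ω, ξ i ω = 0) (i : Fin n) :
    ∫ ω, Real.exp (xbar ξ i ω) ≤ Real.exp ((Real.exp 1 - 2) * ∫ ω, (ξ i ω) ^ 2) := by
  have hi : Integrable (ξ i) := (hL2 i).integrable (by norm_num)
  have hi2 : Integrable (fun ω => (ξ i ω) ^ 2) := (hL2 i).integrable_sq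
  have hx : Integrable (xbar ξ i) := hi.mono (xb_meas ξ hmeas i).aestronglyMeasurable
    (Filter.Eventually.of_forall fun ω => xb_abs ξ i ω)
  have he := Real.exp_one_gt_d9
  have h1 : ∫ ω, Real.exp (xbar ξ i ω) ≤
      ∫ ω, ((1 + ξ i ω) + (Real.exp 1 - 2) * (ξ i ω) ^ 2) := by
    refine integral_mono (xb_exp_int ξ hmeas i)
      (((integrable_const 1).add hi).add (hi2.const_mul _)) fun ω => ?_
    have h := exp_quad _ (xb_le ξ i ω)
    have h2 : xbar ξ i ω ≤ ξ i ω := by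
      unfold xbar; split_ifs with h <;> linarith
    have h3 : (xbar ξ i ω) ^ 2 ≤ (ξ i ω) ^ 2 := sq_le_sq.2 (xb_abs ξ i ω)
    have h4 := mul_le_mul_of_nonneg_left h3 (show 0 ≤ Real.exp 1 - 2 by linarith)
    simp only
    linarith
  have h5 : ∫ ω, ((1 + ξ i ω) + (Real.exp 1 - 2) * (ξ i ω) ^ 2) =
      1 + (Real.exp 1 - 2) * ∫ ω, (ξ i ω) ^ 2 := by
    have hi1 : Integrable (fun ω => 1 + ξ i ω) := (integrable_const 1).add hi
    rw [integral_add hi1 (hi2.const_mul _),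
      integral_add (integrable_const 1) hi, hmean i, integral_const_mul]
    simp
  rw [h5] at h1
  linarith [Real.add_one_le_exp ((Real.exp 1 - 2) * ∫ ω, (ξ i ω) ^ 2)]

lemma Wi_mgf {n : ℕ} (ξ : Fin n → Ω → ℝ) (hmeas : ∀ i, Measurable (ξ i))
    (hindep : iIndepFun ξ ℙ)
    (hL2 : ∀ i, MemLp (ξ i) 2 ℙ) (hmean : ∀ i, ∫ ω, ξ i ω = 0)
    (hvar : ∑ i, ∫ ω, (ξ i ω) ^ 2 = 1) (i : Fin n) :
    Integrable (fun ω => Real.exp (Wbari ξ i ω)) ∧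
    ∫ ω, Real.exp (Wbari ξ i ω) ≤ Real.exp (Real.exp 1 - 2) := by
  have hW : ∀ ω, Wbari ξ i ω = (∑ j ∈ Finset.univ.erase i, xbar ξ j) ω := by
    intro ω
    rw [Wbari, Wbar, ← Finset.add_sum_erase _ _ (Finset.mem_univ i), Finset.sum_apply]
    ring
  have hm : Measurable (fun x : ℝ => if x ≤ 1 then x else 0) :=
    Measurable.ite measurableSet_Iic measurable_id measurable_const
  have hind : iIndepFun (xbar ξ) ℙ := hindep.comp (fun _ x => if x ≤ 1 then x else 0) fun _ => hm
  have hint := hind.integrable_exp_mul_sum (t := 1) (xb_meas ξ hmeas) (s := Finset.univ.erase i)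
    (fun j _ => by simpa using xb_exp_int ξ hmeas j)
  have hmgf := hind.mgf_sum (t := 1) (xb_meas ξ hmeas) (Finset.univ.erase i)
  simp only [mgf, one_mul] at hmgf hint
  simp only [hW]
  refine ⟨hint, ?_⟩
  rw [hmgf]
  have he := Real.exp_one_gt_d9
  calc ∏ j ∈ Finset.univ.erase i, ∫ ω, Real.exp (xbar ξ j ω)
      ≤ ∏ j ∈ Finset.univ.erase i, Real.exp ((Real.exp 1 - 2) * ∫ ω, (ξ j ω) ^ 2) :=
        Finset.prod_le_prod (fun j _ => integral_nonneg fun ω => (exp_pos _).le)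
          fun j _ => xb_mgf ξ hmeas hL2 hmean j
    _ = Real.exp ((Real.exp 1 - 2) * ∑ j ∈ Finset.univ.erase i, ∫ ω, (ξ j ω) ^ 2) := by
        rw [← Real.exp_sum, Finset.mul_sum]
    _ ≤ _ := by
        apply Real.exp_le_exp.2
        have h1 : ∑ j ∈ Finset.univ.erase i, ∫ ω, (ξ j ω) ^ 2 ≤ 1 := by
          rw [← hvar]
          exact Finset.sum_le_sum_of_subset_of_nonneg (Finset.erase_subset _ _)
            fun j _ _ => integral_nonneg fun ω => sq_nonneg _
        nlinarith

end

/-- Bound (4.28) on R3. -/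
theorem R3_bound
    {Ω : Type*} [MeasureSpace Ω] [IsProbabilityMeasure (ℙ : Measure Ω)]
    {n : ℕ} (ξ : Fin n → Ω → ℝ)
    (hmeas : ∀ i, Measurable (ξ i))
    (hindep : iIndepFun ξ ℙ)
    (hL2 : ∀ i, MemLp (ξ i) 2 ℙ)
    (hmean : ∀ i, ∫ ω, ξ i ω = 0)
    (hvar : ∑ i, ∫ ω, (ξ i ω) ^ 2 = 1)
    (z : ℝ) (hz : 2 < z) :
    |∑ i, (∫ ω, (if 1 < ξ i ω then ξ i ω else 0)) * (∫ ω, fz z (Wbari ξ i ω))|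
      ≤ (1 / 2) * (Real.exp (-(1 / 2) : ℝ) + Real.exp (Real.exp 1 - 2))
          * Real.exp (-z / 2) * (beta2 ξ + beta3 ξ) := by
  set C := (1 / 2) * (Real.exp (-(1 / 2) : ℝ) + Real.exp (Real.exp 1 - 2)) * Real.exp (-z / 2)
    with hC
  have hC0 : 0 ≤ C := by positivity
  have hf0 : ∀ i, 0 ≤ ∫ ω, fz z (Wbari ξ i ω) := fun i => integral_nonneg fun ω => fz_nonneg _ _
  have hf : ∀ i, ∫ ω, fz z (Wbari ξ i ω) ≤ C := by
    intro i
    obtain ⟨h1, h2⟩ := Wi_mgf ξ hmeas hindep hL2 hmean hvar i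
    have h3 : ∫ ω, fz z (Wbari ξ i ω) ≤
        ∫ ω, 1 / 2 * Real.exp (-z / 2) * (Real.exp (-(1 / 2)) + Real.exp (Wbari ξ i ω)) :=
      integral_mono_of_nonneg (Filter.Eventually.of_forall fun ω => fz_nonneg _ _)
        (((integrable_const _).add h1).const_mul _)
        (Filter.Eventually.of_forall fun ω => fz_le z _ hz)
    rw [integral_const_mul, integral_add (integrable_const _) h1] at h3
    simp only [integral_const, probReal_univ, one_smul] at h3
    refine h3.trans ?_
    rw [hC, mul_right_comm]
    gcongr
  have ha0 : ∀ i, 0 ≤ ∫ ω, (if 1 < ξ i ω then ξ i ω else 0) := by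
    intro i
    refine integral_nonneg fun ω => ?_
    simp only [Pi.zero_apply]
    split_ifs with h <;> linarith
  have ha : ∀ i, ∫ ω, (if 1 < ξ i ω then ξ i ω else 0) ≤
      ∫ ω, (if 1 < |ξ i ω| then (ξ i ω) ^ 2 else 0) := by
    intro i
    refine integral_mono_of_nonneg (Filter.Eventually.of_forall fun ω => ?_) ?_
      (Filter.Eventually.of_forall fun ω => ?_)
    · simp only [Pi.zero_apply]
      split_ifs with h <;> linarith
    · refine (hL2 i).integrable_sq.mono (Measurable.aestronglyMeasurable ?_)
        (Filter.Eventually.of_forall fun ω => ?_)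
      · exact Measurable.ite (measurableSet_lt measurable_const (hmeas i).abs)
          ((hmeas i).pow_const 2) measurable_const
      · split_ifs <;> simp [sq_nonneg]
    · simp only
      split_ifs with h h' h'
      · nlinarith
      · exact absurd (h.trans_le (le_abs_self _)) h'
      · positivity
      · exact le_rfl
  have hb3 : 0 ≤ beta3 ξ := by
    refine Finset.sum_nonneg fun i _ => integral_nonneg fun ω => ?_
    simp only [Pi.zero_apply]
    split_ifs <;> positivity
  rw [abs_of_nonneg (Finset.sum_nonneg fun i _ => mul_nonneg (ha0 i) (hf0 i))]
  calc _ ≤ ∑ i, (∫ ω, (if 1 < |ξ i ω| then (ξ i ω) ^ 2 else 0)) * C :=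
        Finset.sum_le_sum fun i _ => mul_le_mul (ha i) (hf i) (hf0 i) ((ha0 i).trans (ha i))
    _ = C * beta2 ξ := by rw [← Finset.sum_mul, mul_comm]; rfl
    _ ≤ _ := by nlinarith
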